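/- Let M be a properly infinite σ-finite von Neumann algebra with a faithful normal semifinite trace τ. Let β ∈ M^n (n ≥ 1) be a diagonal n-tuple such that the only finite projection of M belonging to WZ*(β) is 0, and let r ∈ M be a τ-finite projection. Then there exists an isometry v ∈ M (v*v = 1) such that vv* ≤ 1 − r and v* β(j) v = β(j) for every 1 ≤ j ≤ n. -/

import Mathlib

open ContinuousLinearMap Filter Topology

noncomputable section

namespace VNA

variable {H : Type*} [NormedAddCommGroup H] [InnerProductSpace ℂ H] [CompleteSpace H]

/-- A projection (orthogonal projection): idempotent and self-adjoint. -/
def IsProjection (p : H →L[ℂ] H) : Prop := p * p = p ∧ star p = p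

/-- Murray–von Neumann equivalence of `p` and `q` relative to `M`. -/
def MvNE (M : VonNeumannAlgebra H) (p q : H →L[ℂ] H) : Prop :=
  ∃ v ∈ M, star v * v = p ∧ v * star v = q

/-- `p` is a finite projection of `M`; for projections, `q ≤ p` is the range
containment `p * q = q`. -/
def IsFiniteProjection (M : VonNeumannAlgebra H) (p : H →L[ℂ] H) : Prop :=
  p ∈ M ∧ IsProjection p ∧
    ∀ q, q ∈ M → IsProjection q → p * q = q → MvNE M q p → q = p

def IsInfiniteProjection (M : VonNeumannAlgebra H) (p : H →L[ℂ] H) : Prop :=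
  p ∈ M ∧ IsProjection p ∧ ¬ IsFiniteProjection M p

/-- The centre `Z(M) = M ∩ M'` as a set. -/
def centerSet (M : VonNeumannAlgebra H) : Set (H →L[ℂ] H) :=
  {z | z ∈ M ∧ ∀ y ∈ M, z * y = y * z}

def IsCentralProjection (M : VonNeumannAlgebra H) (z : H →L[ℂ] H) : Prop :=
  IsProjection z ∧ z ∈ centerSet M

def IsProperlyInfiniteProjection (M : VonNeumannAlgebra H) (p : H →L[ℂ] H) : Prop :=
  p ∈ M ∧ IsProjection p ∧
    ∀ z, IsCentralProjection M z → z * p ≠ 0 → IsInfiniteProjection M (z * p)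

def ProperlyInfinite (M : VonNeumannAlgebra H) : Prop :=
  IsProperlyInfiniteProjection M 1

/-- `M` is σ-finite: every family of pairwise orthogonal nonzero projections in `M`
is countable. -/
def SigmaFinite (M : VonNeumannAlgebra H) : Prop :=
  ∀ S : Set (H →L[ℂ] H), (∀ p ∈ S, p ∈ M ∧ IsProjection p ∧ p ≠ 0) →
    (∀ p ∈ S, ∀ q ∈ S, p ≠ q → p * q = 0) → S.Countable

/-- A faithful normal semifinite trace on `M`. -/
structure IsFNSTrace (M : VonNeumannAlgebra H) (τ : (H →L[ℂ] H) → ENNReal) : Prop where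
  map_zero : τ 0 = 0
  additive : ∀ x y : H →L[ℂ] H, x ∈ M → y ∈ M → 0 ≤ x → 0 ≤ y → τ (x + y) = τ x + τ y
  homogeneous : ∀ (c : ℝ) (x : H →L[ℂ] H), 0 ≤ c → x ∈ M → 0 ≤ x →
    τ (c • x) = ENNReal.ofReal c * τ x
  tracial : ∀ x : H →L[ℂ] H, x ∈ M → τ (star x * x) = τ (x * star x)
  faithful : ∀ x : H →L[ℂ] H, x ∈ M → 0 ≤ x → τ x = 0 → x = 0
  normal : ∀ (ι : Type*) [Preorder ι] [IsDirected ι (· ≤ ·)] [Nonempty ι]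
      (f : ι → (H →L[ℂ] H)) (x : H →L[ℂ] H),
      (∀ i, f i ∈ M) → (∀ i, 0 ≤ f i) → Monotone f → (∃ C : ℝ, ∀ i, ‖f i‖ ≤ C) →
      x ∈ M → IsLUB (Set.range f) x → τ x = ⨆ i, τ (f i)
  semifinite : ∀ x : H →L[ℂ] H, x ∈ M → 0 ≤ x → x ≠ 0 →
      ∃ y, y ∈ M ∧ 0 ≤ y ∧ y ≤ x ∧ y ≠ 0 ∧ τ y < ⊤

/-- `p` is a `τ`-finite projection of `M`. -/
def IsTauFiniteProjection (M : VonNeumannAlgebra H) (τ : (H →L[ℂ] H) → ENNReal)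
    (p : H →L[ℂ] H) : Prop :=
  p ∈ M ∧ IsProjection p ∧ τ p < ⊤

/-- `F₁⁺(M) = {x ∈ M : 0 ≤ x ≤ 1, px = x for some τ-finite projection p}`. -/
def F1plus (M : VonNeumannAlgebra H) (τ : (H →L[ℂ] H) → ENNReal) : Set (H →L[ℂ] H) :=
  {x | x ∈ M ∧ 0 ≤ x ∧ x ≤ 1 ∧ ∃ p, IsTauFiniteProjection M τ p ∧ p * x = x}

/-- `K(M,τ)`: operator-norm closure of the τ-finitely supported elements of `M`. -/
def Kideal (M : VonNeumannAlgebra H) (τ : (H →L[ℂ] H) → ENNReal) : Set (H →L[ℂ] H) :=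
  closure {x | x ∈ M ∧ ∃ p, IsTauFiniteProjection M τ p ∧ p * x = x}

/-- A commuting self-adjoint `n`-tuple in `M`. -/
def IsCommutingSelfAdjointTuple (M : VonNeumannAlgebra H) {n : ℕ}
    (α : Fin n → (H →L[ℂ] H)) : Prop :=
  (∀ j, α j ∈ M) ∧ (∀ j, star (α j) = α j) ∧ ∀ i j, α i * α j = α j * α i

/-- `‖[r,α]‖ = max_{1≤j≤n} ‖[r, α(j)]‖`. -/
def commNorm {n : ℕ} (α : Fin n → (H →L[ℂ] H)) (r : H →L[ℂ] H) : ℝ :=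
  ⨆ j, ‖r * α j - α j * r‖

/-- `WZ*(S)`: the double commutant in `B(H)` of `S ∪ Z(M)`. -/
def WZstar (M : VonNeumannAlgebra H) (S : Set (H →L[ℂ] H)) : Set (H →L[ℂ] H) :=
  Set.centralizer (Set.centralizer (S ∪ centerSet M))

/-- A diagonal operator of `M`: `d = Σ_k λ_k p_k` with pairwise orthogonal
projections `p_k ∈ M`, the series converging in the strong operator topology. -/
def IsDiagonal (M : VonNeumannAlgebra H) (d : H →L[ℂ] H) : Prop :=
  ∃ (p : ℕ → H →L[ℂ] H) (lam : ℕ → ℂ),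
    (∀ k, p k ∈ M) ∧ (∀ k, IsProjection (p k)) ∧
    (∀ k l, k ≠ l → p k * p l = 0) ∧
    ∀ ξ : H, HasSum (fun k => lam k • (p k ξ)) (d ξ)

end VNA

/-!
The joint eigenspaces of `β` are pairwise orthogonal with dense sum, and the projection `p` onto
each of them lies in `WZ*(β)`. If `z` is central and `z p` has finite trace, then `z p` is a finite
projection in `WZ*(β)`, hence zero; by comparison, `p` therefore dominates infinitely many pairwise
orthogonal copies of any projection `e ≤ p` of finite trace. Shifting these copies along gives
`u ∈ M` with `u* u = p` and `p u = u` whose range is orthogonal to `e`. For `e` the right support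
of `r p` this says `r u = 0`. The sum `v` of these `u` over all joint eigenspaces is an isometry
with `r v = 0`, and it commutes with each `β j`, which is a scalar on every joint eigenspace.
-/

namespace VNA

section PartialIsometry

variable {A : Type*}

lemma star_mul_eq_of_mul_eq [Mul A] [StarMul A] {p x y : A} (hp : IsSelfAdjoint p)
    (h : p * x = y) : star x * p = star y := by
  rw [← h, star_mul, hp.star_eq]

lemma mul_star_eq_of_mul_eq [Mul A] [StarMul A] {p x y : A} (hp : IsSelfAdjoint p)
    (h : x * p = y) : p * star x = star y := by
  rw [← h, star_mul, hp.star_eq]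

/-- `u` is a partial isometry, that is `u u* u = u`; in a C⋆-algebra this means that `u* u` is a
projection. -/
def IsPartialIsometry [Mul A] [Star A] (u : A) : Prop := u * star u * u = u

namespace IsPartialIsometry

section Semigroup

variable [Semigroup A] [StarMul A] {u : A}

lemma star_mul_mul_star (hu : IsPartialIsometry u) : star u * u * star u = star u := by
  simpa only [star_mul, star_star, mul_assoc] using congrArg star hu

lemma isStarProjection_star_mul_self (hu : IsPartialIsometry u) :
    IsStarProjection (star u * u) :=
  ⟨by rw [IsIdempotentElem, ← mul_assoc, hu.star_mul_mul_star], .star_mul_self u⟩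

lemma isStarProjection_mul_star_self (hu : IsPartialIsometry u) :
    IsStarProjection (u * star u) :=
  ⟨by rw [IsIdempotentElem, ← mul_assoc, hu], .mul_star_self u⟩

end Semigroup

section CStarRing

variable [NonUnitalNormedRing A] [StarRing A] [CStarRing A] {u : A}

lemma of_isStarProjection_star_mul_self (hu : IsStarProjection (star u * u)) :
    IsPartialIsometry u := by
  have hp : star u * u * (star u * u) = star u * u := hu.isIdempotentElem
  have hsq : star (u * star u * u - u) * (u * star u * u - u) = 0 := by
    calc star (u * star u * u - u) * (u * star u * u - u)
        = star u * u * (star u * u) * (star u * u) - star u * u * (star u * u)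
          - (star u * u * (star u * u) - star u * u) := by
          simp only [star_sub, star_mul, star_star]
          noncomm_ring
      _ = 0 := by rw [hp, hp, sub_self]
  exact sub_eq_zero.1 ((CStarRing.star_mul_self_eq_zero_iff _).1 hsq)

lemma norm_le_one (hu : IsPartialIsometry u) : ‖u‖ ≤ 1 := by
  have h : ‖u‖ * ‖u‖ ≤ 1 :=
    CStarRing.norm_star_mul_self.symm.trans_le
      (IsStarProjection.norm_le _ hu.isStarProjection_star_mul_self)
  exact abs_le_one_iff_mul_self_le_one.2 h |>.trans' (le_abs_self _)

end CStarRing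

lemma star_mul_self_add_sub [NonUnitalRing A] [StarRing A] {p s : A} (hs : IsPartialIsometry s)
    (hp : IsStarProjection p) (hps : p * s = s) (hsp : s * p = s) (h : star s * s * s = s) :
    star (s + (p - star s * s)) * (s + (p - star s * s)) = p := by
  have hd : IsStarProjection (p - star s * s) :=
    hs.isStarProjection_star_mul_self.sub_of_mul_eq_left hp (by rw [mul_assoc, hsp])
  have hds : (p - star s * s) * s = 0 := by rw [sub_mul, hps, h, sub_self]
  have hsd : star s * (p - star s * s) = 0 := by
    simpa [hd.isSelfAdjoint.star_eq] using congrArg star hds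
  rw [star_add, hd.isSelfAdjoint.star_eq, add_mul, mul_add, mul_add, hds, hsd,
    hd.isIdempotentElem.eq, add_zero, zero_add, add_sub_cancel]

end IsPartialIsometry

/-- A family of partial isometries with pairwise orthogonal initial spaces and pairwise orthogonal
ranges. -/
structure IsOrthogonalPartialIsometries [NonUnitalNonAssocSemiring A] [Star A] {ι : Type*}
    (u : ι → A) : Prop where
  isPartialIsometry : ∀ i, IsPartialIsometry (u i)
  star_mul_eq_zero : Pairwise fun i j => star (u i) * u j = 0
  mul_star_eq_zero : Pairwise fun i j => u i * star (u j) = 0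

lemma IsOrthogonalPartialIsometries.isPartialIsometry_sum [NonUnitalSemiring A] [StarRing A]
    {ι : Type*} {u : ι → A} (hu : IsOrthogonalPartialIsometries u) (F : Finset ι) :
    IsPartialIsometry (∑ i ∈ F, u i) := by
  classical
  have hstar : star (∑ i ∈ F, u i) * ∑ i ∈ F, u i = ∑ i ∈ F, star (u i) * u i := by
    rw [star_sum, Finset.sum_mul_sum]
    refine Finset.sum_congr rfl fun i hi => Finset.sum_eq_single_of_mem i hi fun j _ hj => ?_
    exact hu.star_mul_eq_zero hj.symm
  rw [IsPartialIsometry, mul_assoc, hstar, Finset.sum_mul_sum]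
  refine Finset.sum_congr rfl fun i hi => ?_
  rw [Finset.sum_eq_single_of_mem i hi fun j _ hj => ?_, ← mul_assoc, hu.isPartialIsometry i]
  rw [← mul_assoc, hu.mul_star_eq_zero hj.symm, zero_mul]

end PartialIsometry

section StrongSum

variable {𝕜 E ι : Type*} [RCLike 𝕜] [NormedAddCommGroup E]
  [InnerProductSpace 𝕜 E]

/-- `s = ∑ i, u i` unconditionally in the strong operator topology. -/
def HasStrongSum (u : ι → E →L[𝕜] E) (s : E →L[𝕜] E) : Prop :=
  ∀ x, HasSum (fun i => u i x) (s x)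

namespace HasStrongSum

variable {u : ι → E →L[𝕜] E} {s t : E →L[𝕜] E}

lemma unique (hs : HasStrongSum u s) (ht : HasStrongSum u t) : s = t :=
  ContinuousLinearMap.ext fun x => (hs x).unique (ht x)

lemma mul_left (hs : HasStrongSum u s) (b : E →L[𝕜] E) :
    HasStrongSum (fun i => b * u i) (b * s) :=
  fun x => (hs x).mapL b

lemma mul_right (hs : HasStrongSum u s) (b : E →L[𝕜] E) :
    HasStrongSum (fun i => u i * b) (s * b) :=
  fun x => hs (b x)

lemma eq_of_forall_ne (hs : HasStrongSum u s) (i : ι) (h : ∀ j ≠ i, u j = 0) : s = u i :=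
  ContinuousLinearMap.ext fun x => (hs x).unique (hasSum_single i fun j hj => by simp [h j hj])

lemma eq_zero (hs : HasStrongSum u s) (h : ∀ i, u i = 0) : s = 0 :=
  ContinuousLinearMap.ext fun x => (hs x).unique (by simp [h])

end HasStrongSum

variable [CompleteSpace E] {u : ι → E →L[𝕜] E}

lemma IsOrthogonalPartialIsometries.summable_apply (hu : IsOrthogonalPartialIsometries u)
    (x : E) : Summable fun i => u i x := by
  have horth : OrthogonalFamily 𝕜 (fun i => (u i).range) fun i => (u i).range.subtypeₗᵢ := by
    rw [orthogonalFamily_iff_pairwise]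
    rintro i j hij _ ⟨y, rfl⟩ _ ⟨z, rfl⟩
    have h : (star (u j) * u i) y = 0 := by rw [hu.star_mul_eq_zero hij.symm, zero_apply]
    exact (adjoint_inner_right (u j) z (u i y)).symm.trans
      ((congrArg (inner 𝕜 z) h).trans (inner_zero_right z))
  refine (horth.summable_iff_norm_sq_summable fun i => ⟨u i x, x, rfl⟩).2 ?_
  refine summable_of_sum_le (c := ‖x‖ ^ 2) (fun i => by positivity) fun F => ?_
  have hF : ‖(∑ i ∈ F, u i) x‖ ≤ ‖x‖ := by
    simpa only [one_mul] using
      (∑ i ∈ F, u i).le_of_opNorm_le (hu.isPartialIsometry_sum F).norm_le_one x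
  calc ∑ i ∈ F, ‖(⟨u i x, x, rfl⟩ : (u i).range)‖ ^ 2 = ‖(∑ i ∈ F, u i) x‖ ^ 2 := by
        rw [← horth.norm_sum, _root_.sum_apply]
        rfl
    _ ≤ ‖x‖ ^ 2 := by gcongr

lemma IsOrthogonalPartialIsometries.exists_hasStrongSum (hu : IsOrthogonalPartialIsometries u) :
    ∃ s, HasStrongSum u s :=
  ⟨ContinuousLinearMap.ofTendstoOfBoundedRange (fun x => ∑' i, u i x) (fun F => ∑ i ∈ F, u i)
    (tendsto_pi_nhds.2 fun x => by simpa [HasSum] using (hu.summable_apply x).hasSum)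
    (isBounded_iff_forall_norm_le.2 ⟨1, by
      rintro _ ⟨F, rfl⟩; exact (hu.isPartialIsometry_sum F).norm_le_one⟩),
    fun x => (hu.summable_apply x).hasSum⟩

namespace HasStrongSum

variable {s : E →L[𝕜] E}

lemma mul_star_apply (hs : HasStrongSum u s) (hu : IsOrthogonalPartialIsometries u) (i : ι) :
    s * star (u i) = u i * star (u i) :=
  (hs.mul_right _).eq_of_forall_ne i fun _ hj => hu.mul_star_eq_zero hj

lemma star_mul_apply (hs : HasStrongSum u s) (hu : IsOrthogonalPartialIsometries u) (i : ι) :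
    star s * u i = star (u i) * u i := by
  have h : star (u i) * s = star (u i) * u i :=
    (hs.mul_left _).eq_of_forall_ne i fun _ hj => hu.star_mul_eq_zero hj.symm
  simpa using congrArg star h

lemma mul_star_mul_apply (hs : HasStrongSum u s) (hu : IsOrthogonalPartialIsometries u) (i : ι) :
    s * (star (u i) * u i) = u i := by
  rw [← mul_assoc, hs.mul_star_apply hu, hu.isPartialIsometry i]

lemma self_mul_star_mul_apply (hs : HasStrongSum u s) (hu : IsOrthogonalPartialIsometries u)
    (i : ι) : s * star s * u i = u i := by
  rw [mul_assoc, hs.star_mul_apply hu, hs.mul_star_mul_apply hu]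

lemma star_mul_self_mul_star_apply (hs : HasStrongSum u s)
    (hu : IsOrthogonalPartialIsometries u) (i : ι) : star s * s * star (u i) = star (u i) := by
  rw [mul_assoc, hs.mul_star_apply hu, ← mul_assoc, hs.star_mul_apply hu,
    (hu.isPartialIsometry i).star_mul_mul_star]

lemma star_apply_mul_sub_eq_zero (hs : HasStrongSum u s) (hu : IsOrthogonalPartialIsometries u)
    {f : E →L[𝕜] E} (hf : IsSelfAdjoint f) {i : ι} (hfu : f * u i = u i) :
    star (u i) * (f - s * star s) = 0 := by
  have h : (f - s * star s) * u i = 0 := by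
    rw [sub_mul, hfu, hs.self_mul_star_mul_apply hu, sub_self]
  simpa [hf.star_eq] using congrArg star h

lemma sub_mul_star_apply_eq_zero (hs : HasStrongSum u s) (hu : IsOrthogonalPartialIsometries u)
    {e : E →L[𝕜] E} (he : IsSelfAdjoint e) {i : ι} (hue : u i * e = u i) :
    (e - star s * s) * star (u i) = 0 := by
  have h : e * star (u i) = star (u i) := mul_star_eq_of_mul_eq he hue
  rw [sub_mul, h, hs.star_mul_self_mul_star_apply hu, sub_self]

lemma isPartialIsometry (hs : HasStrongSum u s) (hu : IsOrthogonalPartialIsometries u) :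
    IsPartialIsometry s := by
  refine (hs.mul_left (s * star s)).unique ?_
  simpa only [hs.self_mul_star_mul_apply hu] using hs

end HasStrongSum

end StrongSum

section RangeProjection

variable {𝕜 E : Type*} [RCLike 𝕜] [NormedAddCommGroup E] [InnerProductSpace 𝕜 E]

lemma starProjection_mul_eq_right {K : Submodule 𝕜 E} [K.HasOrthogonalProjection]
    {a : E →L[𝕜] E} (h : ∀ x, a x ∈ K) : K.starProjection * a = a :=
  ContinuousLinearMap.ext fun x => Submodule.starProjection_eq_self_iff.2 (h x)

variable [CompleteSpace E]

lemma mul_starProjection_topologicalClosure_eq_zero {K : Submodule 𝕜 E} {b : E →L[𝕜] E}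
    (h : ∀ x ∈ K, b x = 0) : b * K.topologicalClosure.starProjection = 0 := by
  have hK : K.topologicalClosure ≤ b.ker :=
    K.topologicalClosure_minimal h b.isClosed_ker
  exact ContinuousLinearMap.ext fun x => hK (Submodule.starProjection_apply_mem _ x)

/-- The range projection of `a`: the orthogonal projection onto the closure of its range. -/
def rangeProj (a : E →L[𝕜] E) : E →L[𝕜] E := a.range.topologicalClosure.starProjection

variable (a : E →L[𝕜] E)

lemma isStarProjection_rangeProj : IsStarProjection (rangeProj a) :=
  isStarProjection_starProjection

lemma rangeProj_mul_self : rangeProj a * a = a :=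
  starProjection_mul_eq_right fun x => Submodule.le_topologicalClosure _ ⟨x, rfl⟩

variable {a} {b h : E →L[𝕜] E}

lemma mul_rangeProj_eq_zero_iff : b * rangeProj a = 0 ↔ b * a = 0 := by
  refine ⟨fun hb => by rw [← rangeProj_mul_self a, ← mul_assoc, hb, zero_mul], fun hb => ?_⟩
  refine mul_starProjection_topologicalClosure_eq_zero ?_
  rintro _ ⟨x, rfl⟩
  exact DFunLike.congr_fun hb x

lemma star_rangeProj : star (rangeProj a) = rangeProj a :=
  (isStarProjection_rangeProj a).isSelfAdjoint

lemma rangeProj_star_mul_eq_zero_iff : rangeProj (star a) * b = 0 ↔ a * b = 0 := by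
  rw [← star_eq_zero, star_mul, star_rangeProj, mul_rangeProj_eq_zero_iff, ← star_mul,
    star_eq_zero]

lemma star_mul_mul_rangeProj_eq_zero (hb : star a * b * a = 0) :
    rangeProj a * b * rangeProj a = 0 := by
  have h : star (b * rangeProj a) * a = 0 := by
    simpa only [star_mul, star_star, star_zero, mul_assoc] using
      congrArg star ((mul_assoc _ _ _).symm.trans (mul_rangeProj_eq_zero_iff.2 hb))
  have hE := congrArg star (mul_rangeProj_eq_zero_iff.2 h)
  rwa [star_mul, star_star, star_rangeProj, star_zero, ← mul_assoc] at hE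

/-- Douglas' factorization theorem. -/
lemma exists_mul_eq_of_norm_apply_le {C : ℝ} (hC : ∀ x, ‖a x‖ ≤ C * ‖h x‖) :
    ∃ w : E →L[𝕜] E, w * h = a ∧ w * rangeProj h = w := by
  set K : Submodule 𝕜 E := h.range.topologicalClosure
  let e : E →ₗ[𝕜] K :=
    (h : E →ₗ[𝕜] E).codRestrict K fun x => Submodule.le_topologicalClosure _ ⟨x, rfl⟩
  have hdense : DenseRange e := by
    rw [DenseRange, Subtype.dense_iff]
    intro x hx
    rw [← Set.range_comp]
    exact hx
  refine ⟨(a : E →ₗ[𝕜] E).extendOfNorm e ∘L K.orthogonalProjectionOnto, ?_, ?_⟩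
  · ext x
    have hx : K.orthogonalProjectionOnto (h x) = e x :=
      Submodule.orthogonalProjectionOnto_mem_subspace_eq_self (e x)
    exact (congrArg _ hx).trans (LinearMap.extendOfNorm_eq hdense ⟨C, hC⟩ x)
  · ext x
    exact congrArg ((a : E →ₗ[𝕜] E).extendOfNorm e)
      (Submodule.orthogonalProjectionOnto_mem_subspace_eq_self (K.orthogonalProjectionOnto x))

end RangeProjection

section Polar

variable {H : Type*} [NormedAddCommGroup H] [InnerProductSpace ℂ H] [CompleteSpace H]

lemma norm_cfcAbs_apply (a : H →L[ℂ] H) (x : H) : ‖CFC.abs a x‖ = ‖a x‖ := by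
  have hsq : adjoint (CFC.abs a) ∘L CFC.abs a = adjoint a ∘L a := by
    have habs : star (CFC.abs a) = CFC.abs a := (CFC.abs_nonneg a).isSelfAdjoint
    exact (congrArg (· * CFC.abs a) habs).trans (CFC.abs_mul_abs a)
  rw [← sq_eq_sq₀ (norm_nonneg _) (norm_nonneg _), apply_norm_sq_eq_inner_adjoint_left, hsq,
    ← apply_norm_sq_eq_inner_adjoint_left]

lemma cfcAbs_mul_eq_zero_iff {a b : H →L[ℂ] H} : CFC.abs a * b = 0 ↔ a * b = 0 := by
  simp only [ContinuousLinearMap.ext_iff, mul_apply_eq_comp, zero_apply, ← norm_eq_zero (E := H),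
    norm_cfcAbs_apply]

variable {M : VonNeumannAlgebra H}

lemma mem_of_forall_commutant {x : H →L[ℂ] H} (h : ∀ y ∈ M.commutant, Commute y x) : x ∈ M := by
  rw [← M.commutant_commutant]
  exact VonNeumannAlgebra.mem_commutant_iff.2 h

lemma commute_of_mem_commutant {x y : H →L[ℂ] H} (hx : x ∈ M) (hy : y ∈ M.commutant) :
    Commute x y :=
  VonNeumannAlgebra.mem_commutant_iff.1 hy x hx

lemma HasStrongSum.mem {ι : Type*} {u : ι → H →L[ℂ] H} {s : H →L[ℂ] H} (hs : HasStrongSum u s)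
    (hu : ∀ i, u i ∈ M) : s ∈ M := by
  refine mem_of_forall_commutant fun y hy => (hs.mul_left y).unique ?_
  simpa only [(commute_of_mem_commutant (hu _) hy).eq] using hs.mul_right y

lemma starProjection_topologicalClosure_mem {K : Submodule ℂ H}
    (hK : ∀ y ∈ M.commutant, ∀ x ∈ K, y x ∈ K) : K.topologicalClosure.starProjection ∈ M := by
  refine (VonNeumannAlgebra.IsStarProjection.mem_iff isStarProjection_starProjection M).2
    fun y hy => ?_
  rw [Submodule.range_starProjection]
  exact Submodule.topologicalClosure_mem_invtSubmodule (hK y hy)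

lemma rangeProj_mem {a : H →L[ℂ] H} (ha : a ∈ M) : rangeProj a ∈ M := by
  refine starProjection_topologicalClosure_mem ?_
  rintro y hy _ ⟨x, rfl⟩
  exact ⟨y x, DFunLike.congr_fun (commute_of_mem_commutant ha hy).eq x⟩

lemma cfcAbs_mem {a : H →L[ℂ] H} (ha : a ∈ M) : CFC.abs a ∈ M :=
  mem_of_forall_commutant fun _ hy =>
    (Commute.cfcAbs_left (commute_of_mem_commutant ha hy)
      (commute_of_mem_commutant ha (star_mem hy))).symm

lemma mem_of_mul_mem {w h : H →L[ℂ] H} (hh : h ∈ M) (hwh : w * h ∈ M) (hw : w * rangeProj h = w) :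
    w ∈ M := by
  refine mem_of_forall_commutant fun y hy => sub_eq_zero.1 ?_
  have hcomm : (y * w - w * y) * h = 0 := by
    rw [sub_mul, mul_assoc, mul_assoc, ← commute_of_mem_commutant hh hy, ← mul_assoc w,
      commute_of_mem_commutant hwh hy, sub_self]
  have hE := mul_rangeProj_eq_zero_iff.2 hcomm
  rwa [sub_mul, mul_assoc, hw, mul_assoc, ← commute_of_mem_commutant (rangeProj_mem hh) hy,
    ← mul_assoc, hw] at hE

lemma exists_polar {a : H →L[ℂ] H} (ha : a ∈ M) :
    ∃ w ∈ M, w * CFC.abs a = a ∧ star w * w = rangeProj (CFC.abs a) := by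
  obtain ⟨w, hwa, hwE⟩ := exists_mul_eq_of_norm_apply_le (a := a) (h := CFC.abs a) (C := 1)
    fun x => by rw [one_mul, norm_cfcAbs_apply]
  refine ⟨w, mem_of_mul_mem (cfcAbs_mem ha) (hwa.symm ▸ ha) hwE, hwa, sub_eq_zero.1 ?_⟩
  have habs : star (CFC.abs a) = CFC.abs a := (CFC.abs_nonneg a).isSelfAdjoint
  have h : star (CFC.abs a) * (star w * w - rangeProj (CFC.abs a)) * CFC.abs a = 0 := by
    rw [mul_sub, sub_mul, ← mul_assoc, ← star_mul, hwa, mul_assoc, hwa, mul_assoc,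
      rangeProj_mul_self, habs, CFC.abs_mul_abs, sub_self]
  have hEw : rangeProj (CFC.abs a) * star w = star w :=
    mul_star_eq_of_mul_eq (isStarProjection_rangeProj _).isSelfAdjoint hwE
  have hE := star_mul_mul_rangeProj_eq_zero h
  rwa [mul_sub, sub_mul, ← mul_assoc, hEw, mul_assoc, hwE,
    (isStarProjection_rangeProj _).isIdempotentElem.eq,
    (isStarProjection_rangeProj _).isIdempotentElem.eq] at hE

/-- `w` is a partial isometry with the kernel and the closed range of `a`, both encoded by
annihilators. The example is the partial isometry of the polar decomposition of `a`. -/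
structure IsPolarPart (a w : H →L[ℂ] H) : Prop where
  isPartialIsometry : IsPartialIsometry w
  mul_left_eq_zero_iff : ∀ b, b * w = 0 ↔ b * a = 0
  mul_right_eq_zero_iff : ∀ b, w * b = 0 ↔ a * b = 0

namespace IsPolarPart

variable {a w : H →L[ℂ] H}

lemma mul_left_eq_self_iff (hw : IsPolarPart a w) (b : H →L[ℂ] H) : b * w = w ↔ b * a = a := by
  simpa only [sub_one_mul, sub_eq_zero] using hw.mul_left_eq_zero_iff (b - 1)

lemma mul_right_eq_self_iff (hw : IsPolarPart a w) (b : H →L[ℂ] H) : w * b = w ↔ a * b = a := by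
  simpa only [mul_sub_one, sub_eq_zero] using hw.mul_right_eq_zero_iff (b - 1)

end IsPolarPart

lemma exists_isPolarPart {a : H →L[ℂ] H} (ha : a ∈ M) : ∃ w ∈ M, IsPolarPart a w := by
  obtain ⟨w, hwM, hwa, hww⟩ := exists_polar ha
  have hw : IsPartialIsometry w :=
    .of_isStarProjection_star_mul_self (hww ▸ isStarProjection_rangeProj _)
  refine ⟨w, hwM, hw, fun b => ?_, fun b => ?_⟩
  · rw [← hwa, ← mul_assoc, ← mul_rangeProj_eq_zero_iff (a := CFC.abs a), ← hww, mul_assoc b,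
      ← mul_assoc w, hw]
  · have habs : star (CFC.abs a) = CFC.abs a := (CFC.abs_nonneg a).isSelfAdjoint
    rw [← cfcAbs_mul_eq_zero_iff (a := a), ← rangeProj_star_mul_eq_zero_iff (a := CFC.abs a), habs,
      ← hww]
    exact ⟨fun h => by rw [mul_assoc, h, mul_zero],
      fun h => by rw [← hw, mul_assoc, mul_assoc, ← mul_assoc (star w), h, mul_zero]⟩

end Polar

section Comparison

universe u

lemma exists_maximal_isOrthogonalPartialIsometries {A : Type u} [NonUnitalRing A] [StarRing A]
    {U : Set A} (hU : ∀ u ∈ U, IsPartialIsometry u) :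
    ∃ (ι : Type u) (u : ι → A), IsOrthogonalPartialIsometries u ∧ (∀ i, u i ∈ U) ∧
      ∀ w ∈ U, (∀ i, star (u i) * w = 0 ∧ w * star (u i) = 0) → w = 0 := by
  let r : U → U → Prop := fun u w => star (u : A) * w = 0 ∧ (w : A) * star (u : A) = 0
  have hr : ∀ u w, r u w → r w u := fun u w h =>
    ⟨by simpa using congrArg star h.1, by simpa using congrArg star h.2⟩
  obtain ⟨hchain, hmax⟩ := maxChain_spec (r := r)
  have hpair : Pairwise fun i j : maxChain r => r i j := fun i j hij =>
    (hchain i.2 j.2 (Subtype.coe_injective.ne hij)).elim id (hr _ _)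
  refine ⟨maxChain r, fun i => (i : U), ⟨fun i => hU _ i.1.2, fun i j hij => (hpair hij).1,
    fun i j hij => (hpair hij.symm).2⟩, fun i => i.1.2, fun w hw horth => ?_⟩
  have hmem : (⟨w, hw⟩ : U) ∈ maxChain r := by
    have hins : IsChain r (insert ⟨w, hw⟩ (maxChain r)) :=
      hchain.insert fun u hu _ => .inr (horth ⟨u, hu⟩)
    exact hmax hins (Set.subset_insert _ _) ▸ Set.mem_insert _ _
  rw [← hU w hw, mul_assoc, (horth ⟨_, hmem⟩).1, mul_zero]

variable {H : Type u} [NormedAddCommGroup H] [InnerProductSpace ℂ H] [CompleteSpace H]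
  {M : VonNeumannAlgebra H} {e f : H →L[ℂ] H}

lemma exists_isPartialIsometry_sub_mul_mul_sub_eq_zero (he : e ∈ M) (hf : f ∈ M)
    (hep : IsStarProjection e) (hfp : IsStarProjection f) :
    ∃ v ∈ M, IsPartialIsometry v ∧ v * e = v ∧ f * v = v ∧
      ∀ x ∈ M, (f - v * star v) * x * (e - star v * v) = 0 := by
  obtain ⟨ι, u, hu, huU, hmax⟩ := exists_maximal_isOrthogonalPartialIsometries
    (U := {u | u ∈ M ∧ IsPartialIsometry u ∧ u * e = u ∧ f * u = u}) fun u hu => hu.2.1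
  choose huM _ hue hfu using huU
  obtain ⟨v, hv⟩ := hu.exists_hasStrongSum
  have hvM : v ∈ M := hv.mem huM
  have hve : v * e = v := (hv.mul_right e).unique (by simpa only [hue] using hv)
  have hfv : f * v = v := (hv.mul_left f).unique (by simpa only [hfu] using hv)
  refine ⟨v, hvM, hv.isPartialIsometry hu, hve, hfv, fun x hx => ?_⟩
  set d := f - v * star v with hd
  set d' := e - star v * v with hd'
  have hfd : f * d = d := by
    rw [hd, mul_sub, hfp.isIdempotentElem.eq, ← mul_assoc, hfv]
  have hde : d' * e = d' := by
    rw [hd', sub_mul, hep.isIdempotentElem.eq, mul_assoc, hve]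
  have haM : d * x * d' ∈ M := mul_mem (mul_mem (sub_mem hf (mul_mem hvM (star_mem hvM))) hx)
    (sub_mem he (mul_mem (star_mem hvM) hvM))
  obtain ⟨w, hwM, hw⟩ := exists_isPolarPart haM
  have hwe : w * e = w := by rw [hw.mul_right_eq_self_iff, mul_assoc, hde]
  have hfw : f * w = w := by rw [hw.mul_left_eq_self_iff, ← mul_assoc, ← mul_assoc, hfd]
  have hw0 : w = 0 := hmax w ⟨hwM, hw.isPartialIsometry, hwe, hfw⟩ fun i =>
    ⟨by rw [hw.mul_left_eq_zero_iff, ← mul_assoc, ← mul_assoc,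
        hv.star_apply_mul_sub_eq_zero hu hfp.isSelfAdjoint (hfu i), zero_mul, zero_mul],
      by rw [hw.mul_right_eq_zero_iff, mul_assoc,
        hv.sub_mul_star_apply_eq_zero hu hep.isSelfAdjoint (hue i), mul_zero]⟩
  simpa only [one_mul] using (hw.mul_left_eq_zero_iff 1).1 (by rw [hw0, mul_zero])

lemma starProjection_topologicalClosure_span_mem {s : Set H}
    (hs : ∀ y ∈ M.commutant, ∀ x ∈ s, y x ∈ s) :
    (Submodule.span ℂ s).topologicalClosure.starProjection ∈ M :=
  starProjection_topologicalClosure_mem fun y hy =>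
    Submodule.mapsTo_span (f := (y : H →ₗ[ℂ] H)) (hs y hy)

variable (M) in
/-- The central support of an operator `a` of `M`: the projection onto the closed linear span of
`M a H`. -/
def centralSupport (a : H →L[ℂ] H) : H →L[ℂ] H :=
  (Submodule.span ℂ {y | ∃ x ∈ M, ∃ ξ, x (a ξ) = y}).topologicalClosure.starProjection

variable {a b : H →L[ℂ] H}

lemma centralSupport_mem_center (ha : a ∈ M) : centralSupport M a ∈ centerSet M := by
  have hmem : centralSupport M a ∈ M := by
    refine starProjection_topologicalClosure_span_mem ?_
    rintro y hy _ ⟨x, hx, ξ, rfl⟩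
    exact ⟨x, hx, y ξ, DFunLike.congr_fun (commute_of_mem_commutant (mul_mem hx ha) hy).eq ξ⟩
  have hmem' : centralSupport M a ∈ M.commutant := by
    refine starProjection_topologicalClosure_span_mem ?_
    rintro y hy _ ⟨x, hx, ξ, rfl⟩
    exact ⟨y * x, mul_mem (M.commutant_commutant ▸ hy) hx, ξ, rfl⟩
  exact ⟨hmem, fun y hy => (commute_of_mem_commutant hy hmem').symm⟩

lemma isProjection_iff_isStarProjection {p : H →L[ℂ] H} : IsProjection p ↔ IsStarProjection p :=
  isStarProjection_iff'.symm

lemma isCentralProjection_centralSupport (ha : a ∈ M) :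
    IsCentralProjection M (centralSupport M a) :=
  ⟨isProjection_iff_isStarProjection.2 isStarProjection_starProjection,
    centralSupport_mem_center ha⟩

lemma centralSupport_mul_self : centralSupport M a * a = a :=
  starProjection_mul_eq_right fun ξ => Submodule.le_topologicalClosure _ <|
    Submodule.subset_span ⟨1, one_mem M, ξ, rfl⟩

lemma mul_centralSupport_eq_zero (h : ∀ x ∈ M, b * x * a = 0) : b * centralSupport M a = 0 := by
  refine mul_starProjection_topologicalClosure_eq_zero fun η hη => ?_
  refine (Submodule.span_le (p := b.ker)).2 ?_ hη
  rintro _ ⟨x, hx, ξ, rfl⟩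
  exact DFunLike.congr_fun (h x hx) ξ

/-- The comparison theorem: `v` makes `f` subequivalent to `e` under `z`, and `e` subequivalent to
`f` under `1 - z`. -/
lemma exists_isCentralProjection_comparison (he : e ∈ M) (hf : f ∈ M) (hep : IsStarProjection e)
    (hfp : IsStarProjection f) :
    ∃ v ∈ M, IsPartialIsometry v ∧ v * e = v ∧ f * v = v ∧ ∃ z, IsCentralProjection M z ∧
      f * z = v * star v * z ∧ z * (e - star v * v) = e - star v * v := by
  obtain ⟨v, hvM, hvp, hve, hfv, hv⟩ :=
    exists_isPartialIsometry_sub_mul_mul_sub_eq_zero he hf hep hfp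
  refine ⟨v, hvM, hvp, hve, hfv, _, isCentralProjection_centralSupport
    (sub_mem he (mul_mem (star_mem hvM) hvM)), ?_, centralSupport_mul_self⟩
  rw [← sub_eq_zero, ← sub_mul]
  exact mul_centralSupport_eq_zero hv

end Comparison

section Trace

variable {H : Type*} [NormedAddCommGroup H] [InnerProductSpace ℂ H] [CompleteSpace H]

/-- A faithful trace on the positive cone of `M`: an `IsFNSTrace` without homogeneity, normality
and semifiniteness. -/
structure IsFaithfulTrace (M : VonNeumannAlgebra H) (τ : (H →L[ℂ] H) → ENNReal) : Prop where
  additive : ∀ x y : H →L[ℂ] H, x ∈ M → y ∈ M → 0 ≤ x → 0 ≤ y → τ (x + y) = τ x + τ y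
  tracial : ∀ x : H →L[ℂ] H, x ∈ M → τ (star x * x) = τ (x * star x)
  faithful : ∀ x : H →L[ℂ] H, x ∈ M → 0 ≤ x → τ x = 0 → x = 0

variable {M : VonNeumannAlgebra H} {τ : (H →L[ℂ] H) → ENNReal} {e g p q x y : H →L[ℂ] H}

lemma IsFNSTrace.isFaithfulTrace (hτ : IsFNSTrace M τ) : IsFaithfulTrace M τ :=
  ⟨hτ.additive, hτ.tracial, hτ.faithful⟩

lemma IsTauFiniteProjection.isStarProjection (hp : IsTauFiniteProjection M τ p) :
    IsStarProjection p :=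
  isProjection_iff_isStarProjection.1 hp.2.1

lemma IsCentralProjection.isStarProjection {z : H →L[ℂ] H} (hz : IsCentralProjection M z) :
    IsStarProjection z :=
  isProjection_iff_isStarProjection.1 hz.1

namespace IsFaithfulTrace

lemma trace_eq_add_of_le (hτ : IsFaithfulTrace M τ) (hx : x ∈ M) (hy : y ∈ M) (hx0 : 0 ≤ x)
    (hxy : x ≤ y) : τ y = τ x + τ (y - x) := by
  rw [← hτ.additive x (y - x) hx (sub_mem hy hx) hx0 (sub_nonneg.2 hxy), add_sub_cancel]

lemma isTauFiniteProjection_of_mul_eq (hτ : IsFaithfulTrace M τ)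
    (he : IsTauFiniteProjection M τ e) (hqM : q ∈ M) (hq : IsStarProjection q)
    (hqe : q * e = q) : IsTauFiniteProjection M τ q := by
  refine ⟨hqM, isProjection_iff_isStarProjection.2 hq, lt_of_le_of_lt ?_ he.2.2⟩
  rw [hτ.trace_eq_add_of_le hqM he.1 hq.nonneg (hq.le_of_mul_eq_left he.isStarProjection hqe)]
  exact le_self_add

lemma isTauFiniteProjection_central_mul (hτ : IsFaithfulTrace M τ) {z : H →L[ℂ] H}
    (hz : IsCentralProjection M z) (he : IsTauFiniteProjection M τ e) :
    IsTauFiniteProjection M τ (z * e) :=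
  hτ.isTauFiniteProjection_of_mul_eq he (mul_mem hz.2.1 he.1)
    (hz.isStarProjection.mul he.isStarProjection (hz.2.2 e he.1))
    (by rw [mul_assoc, he.isStarProjection.isIdempotentElem.eq])

lemma isTauFiniteProjection_mul_star_self (hτ : IsFaithfulTrace M τ)
    (he : IsTauFiniteProjection M τ e) (hxM : x ∈ M) (hx : IsPartialIsometry x)
    (hxe : x * e = x) : IsTauFiniteProjection M τ (x * star x) := by
  refine ⟨mul_mem hxM (star_mem hxM),
    isProjection_iff_isStarProjection.2 hx.isStarProjection_mul_star_self, ?_⟩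
  rw [← hτ.tracial x hxM]
  exact (hτ.isTauFiniteProjection_of_mul_eq he (mul_mem (star_mem hxM) hxM)
    hx.isStarProjection_star_mul_self (by rw [mul_assoc, hxe])).2.2

lemma isTauFiniteProjection_add (hτ : IsFaithfulTrace M τ) (hp : IsTauFiniteProjection M τ p)
    (hq : IsTauFiniteProjection M τ q) (hpq : p * q = 0) :
    IsTauFiniteProjection M τ (p + q) := by
  refine ⟨add_mem hp.1 hq.1,
    isProjection_iff_isStarProjection.2 (hp.isStarProjection.add hq.isStarProjection hpq), ?_⟩
  rw [hτ.additive p q hp.1 hq.1 hp.isStarProjection.nonneg hq.isStarProjection.nonneg]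
  exact ENNReal.add_lt_top.2 ⟨hp.2.2, hq.2.2⟩

lemma isFiniteProjection (hτ : IsFaithfulTrace M τ) (hp : IsTauFiniteProjection M τ p) :
    IsFiniteProjection M p := by
  refine ⟨hp.1, hp.2.1, fun q hq hqp hpq ⟨v, hv, hvq, hvp⟩ => ?_⟩
  have hq' := isProjection_iff_isStarProjection.1 hqp
  have hle : q ≤ p := hq'.le_of_mul_eq_right hp.isStarProjection hpq
  have htr : τ q = τ p := by rw [← hvq, ← hvp, hτ.tracial v hv]
  have hadd := hτ.trace_eq_add_of_le hq hp.1 hq'.nonneg hle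
  have hzero : τ (p - q) = 0 := by
    refine (ENNReal.add_right_inj (htr ▸ hp.2.2.ne)).1 ?_
    rw [← hadd, htr, add_zero]
  exact (sub_eq_zero.1 (hτ.faithful _ (sub_mem hp.1 hq) (sub_nonneg.2 hle) hzero)).symm

lemma exists_isTauFiniteProjection_sup (hτ : IsFaithfulTrace M τ)
    (he : IsTauFiniteProjection M τ e) (hg : IsTauFiniteProjection M τ g) (hpg : p * g = g)
    (hxM : x ∈ M) (hxe : x * e = x) (hpx : p * x = x) :
    ∃ q, IsTauFiniteProjection M τ q ∧ p * q = q ∧ q * g = g ∧ q * x = x := by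
  have hgg : g * g = g := hg.isStarProjection.isIdempotentElem
  obtain ⟨w, hwM, hw⟩ := exists_isPolarPart (mul_mem (sub_mem (one_mem M) hg.1) hxM)
  have hwe : w * e = w := by rw [hw.mul_right_eq_self_iff, mul_assoc, hxe]
  have hgw : g * w = 0 := by
    rw [hw.mul_left_eq_zero_iff, ← mul_assoc, mul_one_sub, hgg, sub_self, zero_mul]
  have hpw : p * w = w := by
    rw [hw.mul_left_eq_self_iff, one_sub_mul, mul_sub, hpx, ← mul_assoc, hpg]
  have hwx : w * star w * ((1 - g) * x) = (1 - g) * x :=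
    (hw.mul_left_eq_self_iff _).1 hw.isPartialIsometry
  have hwg : star w * g = 0 := by
    simpa [hg.isStarProjection.isSelfAdjoint.star_eq] using congrArg star hgw
  refine ⟨g + w * star w, hτ.isTauFiniteProjection_add hg
    (hτ.isTauFiniteProjection_mul_star_self he hwM hw.isPartialIsometry hwe)
    (by rw [← mul_assoc, hgw, zero_mul]), by rw [mul_add, hpg, ← mul_assoc, hpw],
    by rw [add_mul, hgg, mul_assoc, hwg, mul_zero, add_zero], ?_⟩
  rw [one_sub_mul, mul_sub, ← mul_assoc _ g, mul_assoc w _ g, hwg, mul_zero, zero_mul,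
    sub_zero] at hwx
  rw [add_mul, hwx, add_sub_cancel]

lemma exists_isTauFiniteProjection_forall_mul_eq (hτ : IsFaithfulTrace M τ)
    (he : IsTauFiniteProjection M τ e) (hpe : p * e = e) (S : Finset (H →L[ℂ] H))
    (hS : ∀ x ∈ S, x ∈ M ∧ x * e = x ∧ p * x = x) :
    ∃ g, IsTauFiniteProjection M τ g ∧ p * g = g ∧ g * e = e ∧ ∀ x ∈ S, g * x = x := by
  classical
  induction S using Finset.induction_on with
  | empty => exact ⟨e, he, hpe, he.isStarProjection.isIdempotentElem, by simp⟩
  | insert x S _ ih =>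
    obtain ⟨g, hg, hpg, hge, hgS⟩ := ih fun y hy => hS y (Finset.mem_insert_of_mem hy)
    obtain ⟨hxM, hxe, hpx⟩ := hS x (Finset.mem_insert_self x S)
    obtain ⟨q, hq, hpq, hqg, hqx⟩ := hτ.exists_isTauFiniteProjection_sup he hg hpg hxM hxe hpx
    have hmul : ∀ y, g * y = y → q * y = y := fun y hy => by rw [← hy, ← mul_assoc, hqg]
    exact ⟨q, hq, hpq, hmul e hge, Finset.forall_mem_insert _ _ _ |>.2
      ⟨hqx, fun y hy => hmul y (hgS y hy)⟩⟩

end IsFaithfulTrace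

variable (M τ) in
/-- `p` is properly infinite with respect to `τ`: its only central cut of finite trace is `0`. -/
def IsProperlyTauInfinite (p : H →L[ℂ] H) : Prop :=
  ∀ z, IsCentralProjection M z → τ (z * p) < ⊤ → z * p = 0

namespace IsProperlyTauInfinite

lemma exists_star_mul_self_eq (hP : IsProperlyTauInfinite M τ p) (hτ : IsFaithfulTrace M τ)
    (hpM : p ∈ M) (hp : IsStarProjection p) (he : IsTauFiniteProjection M τ e) (hpe : p * e = e)
    (hg : IsTauFiniteProjection M τ g) (hpg : p * g = g) :
    ∃ u ∈ M, star u * u = e ∧ p * u = u ∧ g * u = 0 := by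
  have hgp : g * p = g := by
    simpa only [hg.isStarProjection.isSelfAdjoint.star_eq] using
      star_mul_eq_of_mul_eq hp.isSelfAdjoint hpg
  obtain ⟨v, hvM, hv, hve, hfv, z, hz, hfz, hzd⟩ := exists_isCentralProjection_comparison he.1
    (sub_mem hpM hg.1) he.isStarProjection (hg.isStarProjection.sub_of_mul_eq_left hp hgp)
  have hzsub : IsTauFiniteProjection M τ (z * (p - g)) := by
    rw [hz.2.2 _ (sub_mem hpM hg.1), hfz, ← hz.2.2 _ (mul_mem hvM (star_mem hvM))]
    exact hτ.isTauFiniteProjection_central_mul hz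
      (hτ.isTauFiniteProjection_mul_star_self he hvM hv hve)
  have hzp : z * p = 0 := by
    refine hP z hz ?_
    rw [← sub_add_cancel p g, mul_add]
    refine (hτ.isTauFiniteProjection_add hzsub (hτ.isTauFiniteProjection_central_mul hz hg) ?_).2.2
    rw [← mul_assoc, mul_assoc z, ← hz.2.2 _ (sub_mem hpM hg.1), mul_assoc, mul_assoc, sub_mul,
      hpg, hg.isStarProjection.isIdempotentElem.eq, sub_self, mul_zero, mul_zero]
  have hze : z * e = 0 := by rw [← hpe, ← mul_assoc, hzp, zero_mul]
  have hev : e * star v = star v :=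
    mul_star_eq_of_mul_eq he.isStarProjection.isSelfAdjoint hve
  refine ⟨v, hvM, ?_, ?_, ?_⟩
  · rw [← hev, mul_assoc, ← mul_one_sub, ← mul_assoc, hze, zero_mul, eq_comm, mul_one_sub,
      ← mul_assoc, hev, sub_eq_zero] at hzd
    exact hzd.symm
  · rw [← hfv, ← mul_assoc, mul_sub, hp.isIdempotentElem.eq, hpg]
  · rw [← hfv, ← mul_assoc, mul_sub, hgp, hg.isStarProjection.isIdempotentElem.eq, sub_self,
      zero_mul]

lemma exists_seq_star_mul_self_eq (hP : IsProperlyTauInfinite M τ p) (hτ : IsFaithfulTrace M τ)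
    (hpM : p ∈ M) (hp : IsStarProjection p) (he : IsTauFiniteProjection M τ e) (hpe : p * e = e) :
    ∃ w : ℕ → H →L[ℂ] H, w 0 = e ∧ (∀ n, w n ∈ M ∧ star (w n) * w n = e ∧ p * w n = w n) ∧
      Pairwise fun m n => star (w m) * w n = 0 := by
  have hee : star e * e = e := by
    rw [he.isStarProjection.isSelfAdjoint.star_eq, he.isStarProjection.isIdempotentElem.eq]
  have hmul : ∀ x : H →L[ℂ] H, star x * x = e → x * e = x := fun x hx => by
    rw [← hx, ← mul_assoc]
    exact IsPartialIsometry.of_isStarProjection_star_mul_self (hx ▸ he.isStarProjection)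
  have hsymm : ∀ x y : H →L[ℂ] H, star x * y = 0 → star y * x = 0 := fun x y h => by
    simpa using congrArg star h
  have : Std.Symm fun x y : H →L[ℂ] H => star x * y = 0 := ⟨hsymm⟩
  obtain ⟨w, hw, hww⟩ := exists_seq_of_forall_finset_exists'
    (fun x : H →L[ℂ] H => (x ∈ M ∧ star x * x = e ∧ p * x = x) ∧ e * x = 0)
    (fun x y => star x * y = 0) fun S hS => by
      obtain ⟨g, hg, hpg, hge, hgS⟩ := hτ.exists_isTauFiniteProjection_forall_mul_eq he hpe S
        fun x hx => ⟨(hS x hx).1.1, hmul x (hS x hx).1.2.1, (hS x hx).1.2.2⟩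
      obtain ⟨u, huM, hu, hpu, hgu⟩ := hP.exists_star_mul_self_eq hτ hpM hp he hpe hg hpg
      have horth : ∀ x, g * x = x → star x * u = 0 := fun x hx => by
        rw [← hx, star_mul, mul_assoc, hg.isStarProjection.isSelfAdjoint.star_eq, hgu, mul_zero]
      refine ⟨u, ⟨⟨huM, hu, hpu⟩, ?_⟩, fun x hx => horth x (hgS x hx)⟩
      exact he.isStarProjection.isSelfAdjoint.star_eq ▸ horth e hge
  have hew : ∀ n, star e * w n = 0 := fun n =>
    he.isStarProjection.isSelfAdjoint.star_eq.symm ▸ (hw n).2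
  refine ⟨fun n => n.casesOn e w, rfl, ?_, ?_⟩
  · rintro (_ | n)
    exacts [⟨he.1, hee, hpe⟩, (hw n).1]
  · rintro (_ | m) (_ | n) hmn
    exacts [absurd rfl hmn, hew n, hsymm _ _ (hew m), hww (by simpa using hmn)]

end IsProperlyTauInfinite

section Shift

variable {w : ℕ → H →L[ℂ] H}

lemma isOrthogonalPartialIsometries_shift (he : IsStarProjection e)
    (hw : ∀ n, star (w n) * w n = e) (hww : Pairwise fun m n => star (w m) * w n = 0) :
    IsOrthogonalPartialIsometries fun n => w (n + 1) * star (w n) := by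
  have hwp : ∀ n, IsPartialIsometry (w n) := fun n =>
    .of_isStarProjection_star_mul_self (hw n ▸ he)
  refine ⟨fun n => .of_isStarProjection_star_mul_self ?_, fun m n hmn => ?_, fun m n hmn => ?_⟩
  · have h : star (w (n + 1) * star (w n)) * (w (n + 1) * star (w n)) = w n * star (w n) := by
      rw [star_mul, star_star, mul_assoc, ← mul_assoc (star (w (n + 1))), hw, ← hw n,
        (hwp n).star_mul_mul_star]
    exact h ▸ (hwp n).isStarProjection_mul_star_self
  · have h : star (w (m + 1)) * w (n + 1) = 0 := hww (by simpa using hmn)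
    beta_reduce
    rw [star_mul, star_star, mul_assoc, ← mul_assoc (star (w (m + 1))), h, zero_mul, mul_zero]
  · beta_reduce
    rw [star_mul, star_star, mul_assoc, ← mul_assoc (star (w m)), hww hmn, zero_mul, mul_zero]

/-- Here `u` shifts the range of each `w n` onto the range of `w (n + 1)` and is the identity
on the rest of the range of `p`. -/
lemma exists_star_mul_self_eq_and_star_zero_mul_eq_zero (hpM : p ∈ M) (hp : IsStarProjection p)
    (he : IsStarProjection e) (hwM : ∀ n, w n ∈ M) (hw : ∀ n, star (w n) * w n = e)
    (hpw : ∀ n, p * w n = w n) (hww : Pairwise fun m n => star (w m) * w n = 0) :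
    ∃ u ∈ M, star u * u = p ∧ p * u = u ∧ star (w 0) * u = 0 := by
  have ht := isOrthogonalPartialIsometries_shift he hw hww
  obtain ⟨s, hs⟩ := ht.exists_hasStrongSum
  have hsM : s ∈ M := hs.mem fun n => mul_mem (hwM (n + 1)) (star_mem (hwM n))
  have hps : p * s = s := (hs.mul_left p).unique (by simpa only [← mul_assoc, hpw] using hs)
  have hwp : ∀ n, star (w n) * p = star (w n) := fun n =>
    star_mul_eq_of_mul_eq hp.isSelfAdjoint (hpw n)
  have hsp : s * p = s := (hs.mul_right p).unique (by simpa only [mul_assoc, hwp] using hs)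
  have hsw : ∀ n, star s * s * w n = w n := fun n => by
    have hwn : star (w (n + 1) * star (w n)) * w (n + 1) = w n := by
      rw [star_mul, star_star, mul_assoc, hw, ← hw n, ← mul_assoc]
      exact IsPartialIsometry.of_isStarProjection_star_mul_self (hw n ▸ he)
    rw [← hwn, ← mul_assoc, hs.star_mul_self_mul_star_apply ht]
  have hss : star s * s * s = s :=
    (hs.mul_left _).unique (by simpa only [← mul_assoc, hsw] using hs)
  have hws : star (w 0) * s = 0 := by
    refine (hs.mul_left _).eq_zero fun n => ?_
    rw [← mul_assoc, hww n.succ_ne_zero.symm, zero_mul]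
  have hwss : star (w 0) * (star s * s) = star (w 0) :=
    star_mul_eq_of_mul_eq (.star_mul_self s) (hsw 0)
  refine ⟨s + (p - star s * s), add_mem hsM (sub_mem hpM (mul_mem (star_mem hsM) hsM)),
    (hs.isPartialIsometry ht).star_mul_self_add_sub hp hps hsp hss, ?_, ?_⟩
  · have hpss : p * star s = star s := mul_star_eq_of_mul_eq hp.isSelfAdjoint hsp
    rw [mul_add, mul_sub, hps, hp.isIdempotentElem.eq, ← mul_assoc, hpss]
  · rw [mul_add, hws, mul_sub, hwp, hwss, sub_self, add_zero]

end Shift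

namespace IsProperlyTauInfinite

lemma exists_star_mul_self_eq_and_mul_eq_zero (hP : IsProperlyTauInfinite M τ p)
    (hτ : IsFaithfulTrace M τ) (hpM : p ∈ M) (hp : IsStarProjection p)
    {r : H →L[ℂ] H} (hr : IsTauFiniteProjection M τ r) :
    ∃ u ∈ M, star u * u = p ∧ p * u = u ∧ r * u = 0 := by
  obtain ⟨a, haM, ha⟩ := exists_isPolarPart (mul_mem hr.1 hpM)
  have hra : r * a = a := by
    rw [ha.mul_left_eq_self_iff, ← mul_assoc, hr.isStarProjection.isIdempotentElem.eq]
  have hap : a * p = a := by rw [ha.mul_right_eq_self_iff, mul_assoc, hp.isIdempotentElem.eq]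
  have har : star a * r = star a :=
    star_mul_eq_of_mul_eq hr.isStarProjection.isSelfAdjoint hra
  have hpa : p * star a = star a := mul_star_eq_of_mul_eq hp.isSelfAdjoint hap
  have he : IsTauFiniteProjection M τ (star a * a) := by
    have haa : IsPartialIsometry (star a) := by
      rw [IsPartialIsometry, star_star, ha.isPartialIsometry.star_mul_mul_star]
    simpa only [star_star] using hτ.isTauFiniteProjection_mul_star_self hr (star_mem haM) haa har
  obtain ⟨w, hw0, hw, hww⟩ :=
    hP.exists_seq_star_mul_self_eq hτ hpM hp he (by rw [← mul_assoc, hpa])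
  obtain ⟨u, huM, hu, hpu, hwu⟩ := exists_star_mul_self_eq_and_star_zero_mul_eq_zero hpM hp
    he.isStarProjection (fun n => (hw n).1) (fun n => (hw n).2.1) (fun n => (hw n).2.2) hww
  refine ⟨u, huM, hu, hpu, ?_⟩
  have hau : a * u = 0 := by
    rw [hw0, he.isStarProjection.isSelfAdjoint.star_eq] at hwu
    rw [← ha.isPartialIsometry, mul_assoc, mul_assoc, ← mul_assoc (star a), hwu, mul_zero]
  rw [← hpu, ← mul_assoc]
  exact (ha.mul_right_eq_zero_iff u).1 hau

end IsProperlyTauInfinite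

end Trace

section HilbertSum

open Function Module.End Submodule

variable {𝕜 E ι : Type*} [RCLike 𝕜] [NormedAddCommGroup E] [InnerProductSpace 𝕜 E]

lemma starProjection_apply_mem_orthogonal {K L : Submodule 𝕜 E} [K.HasOrthogonalProjection]
    [L.HasOrthogonalProjection] (h : Commute K.starProjection L.starProjection) {x : E}
    (hx : x ∈ (K ⊓ L)ᗮ) : L.starProjection x ∈ Kᗮ := by
  set y := K.starProjection (L.starProjection x)
  have hyK : y ∈ K := starProjection_apply_mem K _
  have hyL : y ∈ L := by
    have hy : y = L.starProjection (K.starProjection x) := DFunLike.congr_fun h.eq x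
    exact hy ▸ starProjection_apply_mem L _
  rw [← starProjection_apply_eq_zero_iff, ← inner_self_eq_zero (𝕜 := 𝕜)]
  calc inner 𝕜 y y = inner 𝕜 y x := by
        rw [← inner_starProjection_left_eq_right, starProjection_eq_self_iff.2 hyK,
          ← inner_starProjection_left_eq_right, starProjection_eq_self_iff.2 hyL]
    _ = 0 := hx y ⟨hyK, hyL⟩

lemma mem_eigenspace_of_commute {d y : E →L[𝕜] E} (h : Commute y d) {c : 𝕜} {x : E}
    (hx : x ∈ eigenspace (d : Module.End 𝕜 E) c) : y x ∈ eigenspace (d : Module.End 𝕜 E) c := by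
  rw [mem_eigenspace_iff, coe_coe] at hx ⊢
  rw [← map_smul, ← hx]
  exact (DFunLike.congr_fun h.eq x).symm

/-- The joint eigenspace of a family `β` of operators for the family `c` of eigenvalues. -/
def jointEigenspace (β : ι → E →L[𝕜] E) (c : ι → 𝕜) : Submodule 𝕜 E :=
  ⨅ i, eigenspace (β i : Module.End 𝕜 E) (c i)

variable {β : ι → E →L[𝕜] E} {c : ι → 𝕜}

lemma mem_jointEigenspace_iff {x : E} :
    x ∈ jointEigenspace β c ↔ ∀ i, β i x = c i • x := by
  simp only [jointEigenspace, Submodule.mem_iInf, mem_eigenspace_iff, coe_coe]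

variable [CompleteSpace E]

lemma isHilbertSum_subtype_iff {V : ι → Submodule 𝕜 E} [∀ i, CompleteSpace (V i)] :
    IsHilbertSum 𝕜 (fun i => V i) (fun i => (V i).subtypeₗᵢ) ↔
      Pairwise ((· ⟂ ·) on V) ∧ (⨆ i, V i)ᗮ = ⊥ := by
  rw [← orthogonalFamily_iff_pairwise, ← topologicalClosure_eq_top_iff]
  refine ⟨fun h => ⟨h.OrthogonalFamily, ?_⟩, fun h => .mkInternal V h.1 h.2.ge⟩
  have hrange := h.OrthogonalFamily.range_linearIsometry
  rw [LinearMap.range_eq_top.2 h.surjective_isometry] at hrange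
  simpa only [subtypeₗᵢ_toLinearMap, range_subtype] using hrange.symm

lemma eq_zero_of_forall_mul_starProjection_eq_zero {V : ι → Submodule 𝕜 E}
    [∀ i, (V i).HasOrthogonalProjection] (hV : (⨆ i, V i)ᗮ = ⊥) {b : E →L[𝕜] E}
    (hb : ∀ i, b * (V i).starProjection = 0) : b = 0 := by
  have hle : ⨆ i, V i ≤ b.ker := iSup_le fun i x hx => by
    rw [← starProjection_eq_self_iff.2 hx]
    exact DFunLike.congr_fun (hb i) x
  have htop : b.ker = ⊤ := by
    rw [← b.isClosed_ker.submodule_topologicalClosure_eq, topologicalClosure_eq_top_iff, eq_bot_iff,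
      ← hV]
    exact orthogonal_le hle
  exact ContinuousLinearMap.ext fun x => (htop ▸ mem_top : x ∈ b.ker)

lemma commute_starProjection_of_forall_mem {V : ι → Submodule 𝕜 E} [∀ i, CompleteSpace (V i)]
    (hV : IsHilbertSum 𝕜 (fun i => V i) (fun i => (V i).subtypeₗᵢ)) {y : E →L[𝕜] E}
    (hy : ∀ i, ∀ x ∈ V i, y x ∈ V i) (i : ι) : Commute y (V i).starProjection := by
  obtain ⟨hortho, htotal⟩ := isHilbertSum_subtype_iff.1 hV
  refine sub_eq_zero.1 (eq_zero_of_forall_mul_starProjection_eq_zero htotal fun j => ?_)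
  ext x
  have hx : (V j).starProjection x ∈ V j := starProjection_apply_mem _ x
  suffices y ((V i).starProjection ((V j).starProjection x)) =
      (V i).starProjection (y ((V j).starProjection x)) from sub_eq_zero.2 this
  obtain rfl | hij := eq_or_ne i j
  · rw [starProjection_eq_self_iff.2 hx, starProjection_eq_self_iff.2 (hy i _ hx)]
  · have hle : V j ≤ (V i)ᗮ := (hortho hij).symm
    rw [(starProjection_apply_eq_zero_iff _).2 (hle hx),
      (starProjection_apply_eq_zero_iff _).2 (hle (hy j _ hx)), map_zero]

lemma commute_starProjection_of_isSelfAdjoint {K : Submodule 𝕜 E} [K.HasOrthogonalProjection]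
    {y : E →L[𝕜] E} (hy : IsSelfAdjoint y) (hK : ∀ x ∈ K, y x ∈ K) :
    Commute y K.starProjection := by
  have h : K.starProjection * (y * K.starProjection) = y * K.starProjection :=
    starProjection_mul_eq_right fun x => hK _ (starProjection_apply_mem K x)
  have hstar := congrArg star h
  simp only [star_mul, hy.star_eq, (isSelfAdjoint_starProjection K).star_eq] at hstar
  rw [Commute, SemiconjBy, ← h, ← hstar, mul_assoc]

instance completeSpace_iInf {ι : Sort*} {V : ι → Submodule 𝕜 E} [∀ i, CompleteSpace (V i)] :
    CompleteSpace (⨅ i, V i : Submodule 𝕜 E) := by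
  refine IsClosed.completeSpace_coe (s := ((⨅ i, V i : Submodule 𝕜 E) : Set E)) (hs := ?_)
  rw [coe_iInf]
  exact isClosed_iInter fun i => (completeSpace_coe_iff_isComplete.1 inferInstance).isClosed

lemma iSup_iInf_orthogonal_eq_bot [Finite ι] {κ : Type*} [Nonempty κ]
    {V : ι → κ → Submodule 𝕜 E} [∀ i k, CompleteSpace (V i k)] (hV : ∀ i, (⨆ k, V i k)ᗮ = ⊥)
    (hcomm : ∀ i j k l, Commute (V i k).starProjection (V j l).starProjection) :
    (⨆ c : ι → κ, ⨅ i, V i (c i))ᗮ = ⊥ := by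
  classical
  suffices h : ∀ s : Set ι, (⨆ c : ι → κ, ⨅ i ∈ s, V i (c i))ᗮ = ⊥ by
    simpa only [Set.mem_univ, iInf_pos] using h Set.univ
  intro s
  induction s, s.toFinite using Set.Finite.induction_on with
  | empty => simp
  | @insert i s his _ ih =>
    rw [eq_bot_iff, ← ih, ← iInf_orthogonal, ← iInf_orthogonal]
    refine le_iInf fun c x hx => ?_
    rw [← starProjection_apply_eq_zero_iff, ← mem_bot 𝕜, ← hV i, ← iInf_orthogonal,
      Submodule.mem_iInf]
    intro k
    refine starProjection_apply_mem_orthogonal ?_ ?_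
    · refine commute_starProjection_of_isSelfAdjoint (isSelfAdjoint_starProjection _) ?_
      simp only [Submodule.mem_iInf]
      intro x hx j hj
      rw [← starProjection_eq_self_iff.2 (hx j hj)]
      have hx' := DFunLike.congr_fun (hcomm i j k (c j)).eq x
      exact hx' ▸ starProjection_apply_mem _ _
    · convert (Submodule.mem_iInf _).1 hx (update c i k) using 2
      rw [iInf_insert, update_self]
      congr! 4 with j hj
      rw [update_of_ne (ne_of_mem_of_not_mem hj his)]

/-- The continuous linear map `d` is diagonalizable: the space is the Hilbert sum of the
eigenspaces of `d`. -/
def IsDiagonalizable (d : E →L[𝕜] E) : Prop :=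
  IsHilbertSum 𝕜 (fun c => eigenspace (d : Module.End 𝕜 E) c)
    fun c => (eigenspace (d : Module.End 𝕜 E) c).subtypeₗᵢ

instance completeSpace_jointEigenspace : CompleteSpace (jointEigenspace β c) :=
  completeSpace_iInf

lemma mul_starProjection_jointEigenspace (β : ι → E →L[𝕜] E) (c : ι → 𝕜) (i : ι) :
    β i * (jointEigenspace β c).starProjection = c i • (jointEigenspace β c).starProjection :=
  ContinuousLinearMap.ext fun x =>
    mem_jointEigenspace_iff.1 (starProjection_apply_mem (jointEigenspace β c) x) i

lemma isHilbertSum_jointEigenspace [Finite ι] (hdiag : ∀ i, IsDiagonalizable (β i))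
    (hcomm : ∀ i j, Commute (β i) (β j)) :
    IsHilbertSum 𝕜 (fun c => jointEigenspace β c) fun c => (jointEigenspace β c).subtypeₗᵢ := by
  have hV i := isHilbertSum_subtype_iff.1 (hdiag i)
  refine isHilbertSum_subtype_iff.2 ⟨fun c c' hne => ?_, ?_⟩
  · obtain ⟨i, hi⟩ := Function.ne_iff.1 hne
    exact ((hV i).1 hi).mono (iInf_le _ i) (iInf_le _ i)
  · refine iSup_iInf_orthogonal_eq_bot (fun i => (hV i).2) fun i j k l => ?_
    have hβ : Commute (β j) (eigenspace (β i : Module.End 𝕜 E) k).starProjection :=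
      commute_starProjection_of_forall_mem (hdiag i)
        (fun _ _ => mem_eigenspace_of_commute (hcomm j i)) k
    exact commute_starProjection_of_forall_mem (hdiag j)
      (fun _ _ => mem_eigenspace_of_commute hβ.symm) l

lemma commute_starProjection_jointEigenspace [Finite ι] (hdiag : ∀ i, IsDiagonalizable (β i))
    (hcomm : ∀ i j, Commute (β i) (β j)) {y : E →L[𝕜] E} (hy : ∀ i, Commute y (β i))
    (c : ι → 𝕜) : Commute y (jointEigenspace β c).starProjection :=
  commute_starProjection_of_forall_mem (isHilbertSum_jointEigenspace hdiag hcomm)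
    (fun _ _ hx => (Submodule.mem_iInf _).2 fun i =>
      mem_eigenspace_of_commute (hy i) ((Submodule.mem_iInf _).1 hx i)) c

end HilbertSum

section Diagonal

open Module.End Submodule

variable {𝕜 E ι : Type*} [RCLike 𝕜] [NormedAddCommGroup E] [InnerProductSpace 𝕜 E]
  [CompleteSpace E] {p : ι → E →L[𝕜] E} {l : ι → 𝕜} {d : E →L[𝕜] E}

lemma HasStrongSum.apply_mem_eigenspace (hs : HasStrongSum (fun i => l i • p i) d)
    (hp : ∀ i, IsStarProjection (p i)) (hpo : Pairwise fun i j => p i * p j = 0) (i : ι) (x : E) :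
    p i x ∈ eigenspace (d : Module.End 𝕜 E) (l i) := by
  have h : d * p i = l i • p i * p i :=
    (hs.mul_right (p i)).eq_of_forall_ne i fun j hj => by
      rw [smul_mul_assoc, hpo hj, smul_zero]
  rw [smul_mul_assoc, (hp i).isIdempotentElem.eq] at h
  exact mem_eigenspace_iff.2 (DFunLike.congr_fun h x)

lemma HasStrongSum.apply_eq_zero (hs : HasStrongSum (fun i => l i • p i) d)
    (hp : ∀ i, IsStarProjection (p i)) (hpo : Pairwise fun i j => p i * p j = 0) {i : ι} {c : 𝕜}
    (hc : l i ≠ c) {x : E} (hx : x ∈ eigenspace (d : Module.End 𝕜 E) c) : p i x = 0 := by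
  have h : p i * d = p i * (l i • p i) :=
    (hs.mul_left (p i)).eq_of_forall_ne i fun j hj => by
      rw [mul_smul_comm, hpo hj.symm, smul_zero]
  rw [mul_smul_comm, (hp i).isIdempotentElem.eq] at h
  have hx' : p i (d x) = l i • p i x := DFunLike.congr_fun h x
  have hdx : d x = c • x := mem_eigenspace_iff.1 hx
  rw [hdx, map_smul, eq_comm, ← sub_eq_zero, ← sub_smul] at hx'
  exact (smul_eq_zero.1 hx').resolve_left (sub_ne_zero.2 hc)

lemma HasStrongSum.isDiagonalizable (hs : HasStrongSum (fun i => l i • p i) d)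
    (hp : ∀ i, IsStarProjection (p i)) (hpo : Pairwise fun i j => p i * p j = 0) :
    IsDiagonalizable d := by
  have hsymm i (x y : E) : inner 𝕜 (p i x) y = inner 𝕜 x (p i y) :=
    (hp i).isSelfAdjoint.isSymmetric x y
  refine isHilbertSum_subtype_iff.2 ⟨fun c c' hne => ?_, ?_⟩
  · wlog hc' : c' ≠ 0 generalizing c c'
    · exact (this c' c hne.symm fun hc => hne (hc.trans (not_not.1 hc').symm)).symm
    refine isOrtho_iff_inner_eq.2 fun x hx y hy => ?_
    have hpxy i : inner 𝕜 x (p i y) = 0 := by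
      by_cases hi : l i = c'
      · rw [← hsymm, hs.apply_eq_zero hp hpo (hi.trans_ne hne.symm) hx,
          inner_zero_left]
      · rw [hs.apply_eq_zero hp hpo hi hy, inner_zero_right]
    have hxy : inner 𝕜 x (d y) = 0 := by
      refine ((hs y).mapL (innerSL 𝕜 x)).unique ?_
      simp [hpxy]
    have hdy : d y = c' • y := mem_eigenspace_iff.1 hy
    rw [hdy, inner_smul_right] at hxy
    exact (mul_eq_zero.1 hxy).resolve_left hc'
  · rw [eq_bot_iff, ← iInf_orthogonal]
    intro x hx
    rw [Submodule.mem_iInf] at hx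
    have hpx i : p i x = 0 := by
      have hidem : p i (p i x) = p i x := DFunLike.congr_fun (hp i).isIdempotentElem.eq x
      rw [← inner_self_eq_zero (𝕜 := 𝕜), ← hsymm, hidem]
      exact hx (l i) _ (hs.apply_mem_eigenspace hp hpo i x)
    have hdx : d x = 0 := (hs x).unique (by simp [hpx])
    have hx0 : x ∈ eigenspace (d : Module.End 𝕜 E) 0 :=
      mem_eigenspace_iff.2 (hdx.trans (zero_smul 𝕜 x).symm)
    exact (mem_bot 𝕜).2 (inner_self_eq_zero.1 (hx 0 x hx0))

variable {H : Type*} [NormedAddCommGroup H] [InnerProductSpace ℂ H] [CompleteSpace H]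
  {M : VonNeumannAlgebra H}

lemma IsDiagonal.isDiagonalizable {d : H →L[ℂ] H} (hd : IsDiagonal M d) : IsDiagonalizable d := by
  obtain ⟨p, l, -, hp, hpo, hs⟩ := hd
  exact HasStrongSum.isDiagonalizable hs (fun k => isProjection_iff_isStarProjection.1 (hp k)) hpo

end Diagonal

section Gluing

variable {𝕜 E ι : Type*} [RCLike 𝕜] [NormedAddCommGroup E] [InnerProductSpace 𝕜 E]
  [CompleteSpace E] {V : ι → Submodule 𝕜 E} [∀ i, CompleteSpace (V i)] {u : ι → E →L[𝕜] E}

lemma isOrthogonalPartialIsometries_of_isHilbertSum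
    (hV : IsHilbertSum 𝕜 (fun i => V i) (fun i => (V i).subtypeₗᵢ))
    (hu : ∀ i, star (u i) * u i = (V i).starProjection)
    (hVu : ∀ i, (V i).starProjection * u i = u i) : IsOrthogonalPartialIsometries u := by
  have hV0 : Pairwise fun i j => (V i).starProjection * (V j).starProjection = 0 := fun i j hij =>
    ContinuousLinearMap.ext fun x => (Submodule.starProjection_apply_eq_zero_iff _).2 <|
      ((isHilbertSum_subtype_iff.1 hV).1 hij).symm (Submodule.starProjection_apply_mem _ x)
  have hpi (i) : IsPartialIsometry (u i) :=
    .of_isStarProjection_star_mul_self (hu i ▸ isStarProjection_starProjection)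
  have huV (i) : u i * (V i).starProjection = u i := by rw [← hu, ← mul_assoc, hpi i]
  have hsu (i) : star (u i) * (V i).starProjection = star (u i) :=
    star_mul_eq_of_mul_eq (isSelfAdjoint_starProjection _) (hVu i)
  have hus (i) : (V i).starProjection * star (u i) = star (u i) :=
    mul_star_eq_of_mul_eq (isSelfAdjoint_starProjection _) (huV i)
  refine ⟨hpi, fun i j hij => ?_, fun i j hij => ?_⟩
  · calc star (u i) * u j
        = star (u i) * (V i).starProjection * ((V j).starProjection * u j) := by rw [hsu, hVu]
      _ = 0 := by rw [mul_assoc, ← mul_assoc _ _ (u j), hV0 hij, zero_mul, mul_zero]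
  · calc u i * star (u j)
        = u i * (V i).starProjection * ((V j).starProjection * star (u j)) := by rw [huV, hus]
      _ = 0 := by rw [mul_assoc, ← mul_assoc _ _ (star (u j)), hV0 hij, zero_mul, mul_zero]

namespace HasStrongSum

variable {s : E →L[𝕜] E}

lemma mul_starProjection (hs : HasStrongSum u s) (hu : IsOrthogonalPartialIsometries u)
    (huV : ∀ i, star (u i) * u i = (V i).starProjection) (i : ι) :
    s * (V i).starProjection = u i := by
  rw [← huV, hs.mul_star_mul_apply hu]

lemma star_mul_self_eq_one (hs : HasStrongSum u s) (hu : IsOrthogonalPartialIsometries u)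
    (huV : ∀ i, star (u i) * u i = (V i).starProjection) (hV : (⨆ i, V i)ᗮ = ⊥) :
    star s * s = 1 := by
  refine sub_eq_zero.1 (eq_zero_of_forall_mul_starProjection_eq_zero hV fun i => ?_)
  rw [sub_mul, one_mul, mul_assoc, hs.mul_starProjection hu huV, hs.star_mul_apply hu, huV,
    sub_self]

lemma commute_of_mul_starProjection_eq_smul (hs : HasStrongSum u s)
    (hu : IsOrthogonalPartialIsometries u)
    (huV : ∀ i, star (u i) * u i = (V i).starProjection)
    (hVu : ∀ i, (V i).starProjection * u i = u i) (hV : (⨆ i, V i)ᗮ = ⊥) {b : E →L[𝕜] E}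
    {c : ι → 𝕜} (hb : ∀ i, b * (V i).starProjection = c i • (V i).starProjection) :
    Commute b s := by
  refine sub_eq_zero.1 (eq_zero_of_forall_mul_starProjection_eq_zero hV fun i => ?_)
  have hbu : b * u i = c i • u i := by rw [← hVu, ← mul_assoc, hb, smul_mul_assoc]
  rw [sub_mul, mul_assoc, mul_assoc, hb, mul_smul_comm, hs.mul_starProjection hu huV, hbu,
    sub_self]

end HasStrongSum

end Gluing

section JointEigenspace

variable {H ι : Type*} [NormedAddCommGroup H] [InnerProductSpace ℂ H] [CompleteSpace H]
  [Finite ι] {M : VonNeumannAlgebra H} {β : ι → H →L[ℂ] H}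

lemma starProjection_jointEigenspace_mem (hβ : ∀ i, β i ∈ M)
    (hdiag : ∀ i, IsDiagonalizable (β i)) (hcomm : ∀ i j, Commute (β i) (β j)) (c : ι → ℂ) :
    (jointEigenspace β c).starProjection ∈ M :=
  mem_of_forall_commutant fun _ hy => commute_starProjection_jointEigenspace hdiag hcomm
    (fun i => (commute_of_mem_commutant (hβ i) hy).symm) c

lemma mul_starProjection_jointEigenspace_mem_WZstar (hdiag : ∀ i, IsDiagonalizable (β i))
    (hcomm : ∀ i j, Commute (β i) (β j)) {z : H →L[ℂ] H} (hz : z ∈ centerSet M) (c : ι → ℂ) :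
    z * (jointEigenspace β c).starProjection ∈ WZstar M (Set.range β) := by
  intro y hy
  have hyz : Commute y z := (hy z (.inr hz)).symm
  have hyβ (i) : Commute y (β i) := (hy _ (.inl ⟨i, rfl⟩)).symm
  exact hyz.mul_right (commute_starProjection_jointEigenspace hdiag hcomm hyβ c)

lemma isProperlyTauInfinite_starProjection_jointEigenspace {τ : (H →L[ℂ] H) → ENNReal}
    (hτ : IsFaithfulTrace M τ) (hβ : ∀ i, β i ∈ M) (hdiag : ∀ i, IsDiagonalizable (β i))
    (hcomm : ∀ i j, Commute (β i) (β j))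
    (htriv : ∀ x ∈ WZstar M (Set.range β), IsFiniteProjection M x → x = 0) (c : ι → ℂ) :
    IsProperlyTauInfinite M τ (jointEigenspace β c).starProjection := fun z hz hzt => by
  have hM := starProjection_jointEigenspace_mem hβ hdiag hcomm c
  have hproj : IsStarProjection (z * (jointEigenspace β c).starProjection) :=
    hz.isStarProjection.mul isStarProjection_starProjection (hz.2.2 _ hM)
  exact htriv _ (mul_starProjection_jointEigenspace_mem_WZstar hdiag hcomm hz.2 c)
    (hτ.isFiniteProjection
      ⟨mul_mem hz.2.1 hM, isProjection_iff_isStarProjection.2 hproj, hzt⟩)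

end JointEigenspace

end VNA

open VNA in
theorem statement_16_general {H ι : Type*} [NormedAddCommGroup H] [InnerProductSpace ℂ H]
    [CompleteSpace H] [Finite ι] (M : VonNeumannAlgebra H) (τ : (H →L[ℂ] H) → ENNReal)
    (hτ : IsFaithfulTrace M τ) (β : ι → (H →L[ℂ] H)) (hβ : ∀ i, β i ∈ M)
    (hdiag : ∀ i, IsDiagonalizable (β i)) (hcomm : ∀ i j, Commute (β i) (β j))
    (htriv : ∀ x ∈ WZstar M (Set.range β), IsFiniteProjection M x → x = 0)
    (r : H →L[ℂ] H) (hr : IsTauFiniteProjection M τ r) :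
    ∃ v, v ∈ M ∧ star v * v = 1 ∧ (1 - r) * (v * star v) = v * star v ∧
      ∀ i, star v * β i * v = β i := by
  have hP (c : ι → ℂ) : ∃ u ∈ M, star u * u = (jointEigenspace β c).starProjection ∧
      (jointEigenspace β c).starProjection * u = u ∧ r * u = 0 :=
    (isProperlyTauInfinite_starProjection_jointEigenspace hτ hβ hdiag hcomm htriv
        c).exists_star_mul_self_eq_and_mul_eq_zero hτ
      (starProjection_jointEigenspace_mem hβ hdiag hcomm c) isStarProjection_starProjection hr
  choose u huM huu hPu hru using hP
  have hsum := isHilbertSum_jointEigenspace hdiag hcomm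
  have htotal := (isHilbertSum_subtype_iff.1 hsum).2
  have hu := isOrthogonalPartialIsometries_of_isHilbertSum hsum huu hPu
  obtain ⟨v, hv⟩ := hu.exists_hasStrongSum
  have hvv : star v * v = 1 := hv.star_mul_self_eq_one hu huu htotal
  have hrv : r * v = 0 := (hv.mul_left r).eq_zero hru
  refine ⟨v, hv.mem huM, hvv, ?_, fun i => ?_⟩
  · rw [← mul_assoc, sub_mul, one_mul, hrv, sub_zero]
  · have hβv : Commute (β i) v := hv.commute_of_mul_starProjection_eq_smul hu huu hPu htotal
      fun c => mul_starProjection_jointEigenspace β c i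
    rw [mul_assoc, hβv.eq, ← mul_assoc, hvv, one_mul]

open VNA in
/-- For a diagonal tuple `β` with `WZ*(β)` containing no nonzero finite
projection and a τ-finite projection `r`, there is an isometry `v` with `v v* ≤ 1 - r`
commuting appropriately: `v* β(j) v = β(j)`. -/
theorem statement_16 {H : Type*} [NormedAddCommGroup H] [InnerProductSpace ℂ H]
    [CompleteSpace H] (M : VonNeumannAlgebra H)
    (hM : ProperlyInfinite M) (hσ : SigmaFinite M)
    (τ : (H →L[ℂ] H) → ENNReal) (hτ : IsFNSTrace M τ)
    (n : ℕ) (hn : 0 < n) (β : Fin n → (H →L[ℂ] H))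
    (hβmem : ∀ j, β j ∈ M) (hβdiag : ∀ j, IsDiagonal M (β j))
    (hβcomm : ∀ i j, β i * β j = β j * β i)
    (htriv : ∀ x ∈ WZstar M (Set.range β), IsFiniteProjection M x → x = 0)
    (r : H →L[ℂ] H) (hr : IsTauFiniteProjection M τ r) :
    ∃ v, v ∈ M ∧ star v * v = 1 ∧
      (1 - r) * (v * star v) = v * star v ∧
      ∀ j, star v * β j * v = β j :=
  statement_16_general M τ hτ.isFaithfulTrace β hβmem (fun j => (hβdiag j).isDiagonalizable)
    hβcomm htriv r hr
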